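/- (Theorem 2, bounded suboptimality of IxG*, invariant form.) Let (V, E, w) be a finite weighted directed graph with nonnegative weights, let s, t be vertices such that some walk from s to t exists, let ε ≥ 1 be a real number, and let h : V → ℝ be admissible for target t with h(v) ≥ 0 for all v. Let g : V → ℝ be such that for every walk W from s to t there exists an occurrence of a vertex v on W such that g(v) is at most the cost of the prefix of W up to v and g(t) ≤ g(v) + ε·h(v). Then g(t) ≤ ε·d(s,t), where d(s,t) is the infimum of the costs of walks from s to t. -/

import Mathlib

/-- A walk from `s` to `t` in the directed graph with adjacency `E`:
a nonempty list of vertices starting at `s`, ending at `t`, with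
consecutive vertices adjacent. -/
def IsWalk {V : Type*} (E : V → V → Prop) (s t : V) (l : List V) : Prop :=
  l ≠ [] ∧ l.head? = some s ∧ l.getLast? = some t ∧ l.Chain' E

/-- Cost of a walk: the sum of the weights of its consecutive pairs. -/
def walkCost {V : Type*} (w : V → V → ℝ) (l : List V) : ℝ :=
  ((l.zip l.tail).map fun p => w p.1 p.2).sum

section

variable {V : Type*} {E : V → V → Prop} {w : V → V → ℝ} {s t v : V} {l l₁ l₂ : List V}

theorem walkCost_singleton (w : V → V → ℝ) (v : V) : walkCost w [v] = 0 := by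
  simp [walkCost]

theorem walkCost_cons_cons (w : V → V → ℝ) (a b : V) (l : List V) :
    walkCost w (a :: b :: l) = w a b + walkCost w (b :: l) := by
  simp [walkCost]

theorem walkCost_append_cons (w : V → V → ℝ) (l₁ : List V) (v : V) (l₂ : List V) :
    walkCost w (l₁ ++ v :: l₂) = walkCost w (l₁ ++ [v]) + walkCost w (v :: l₂) := by
  induction l₁ using List.twoStepInduction with
  | nil => simp [walkCost_singleton]
  | singleton a => simp [walkCost_cons_cons, walkCost_singleton]
  | cons_cons a b l _ ih =>
    simp only [List.cons_append, walkCost_cons_cons] at ih ⊢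
    rw [ih b, add_assoc]

theorem walkCost_nonneg_of_isChain (hl : l.IsChain fun a b => 0 ≤ w a b) : 0 ≤ walkCost w l := by
  induction hl with
  | nil => simp [walkCost]
  | singleton a => exact (walkCost_singleton w a).ge
  | cons_cons hab _ ih =>
    rw [walkCost_cons_cons]
    exact add_nonneg hab ih

-- The prefix has nonnegative cost, so it may be inflated by `ε ≥ 1` along with the suffix.
theorem le_mul_walkCost_append_cons {x y z ε : ℝ} (hε : 1 ≤ ε)
    (hprefix : 0 ≤ walkCost w (l₁ ++ [v])) (hy : y ≤ walkCost w (l₁ ++ [v]))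
    (hz : z ≤ walkCost w (v :: l₂)) (hx : x ≤ y + ε * z) :
    x ≤ ε * walkCost w (l₁ ++ v :: l₂) :=
  calc
    x ≤ y + ε * z := hx
    _ ≤ walkCost w (l₁ ++ [v]) + ε * walkCost w (v :: l₂) := by gcongr
    _ ≤ ε * walkCost w (l₁ ++ [v]) + ε * walkCost w (v :: l₂) := by
      gcongr
      exact le_mul_of_one_le_left hprefix hε
    _ = ε * walkCost w (l₁ ++ v :: l₂) := by rw [walkCost_append_cons w l₁ v l₂, mul_add]

namespace IsWalk

theorem left (hl : IsWalk E s t (l₁ ++ v :: l₂)) : IsWalk E s v (l₁ ++ [v]) := by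
  obtain ⟨-, hhead, -, hchain⟩ := hl
  exact ⟨by simp, by simpa using hhead, by simp, (List.isChain_split.1 hchain).1⟩

theorem right (hl : IsWalk E s t (l₁ ++ v :: l₂)) : IsWalk E v t (v :: l₂) := by
  obtain ⟨-, -, hlast, hchain⟩ := hl
  exact ⟨by simp, by simp, by simpa using hlast, (List.isChain_split.1 hchain).2⟩

theorem walkCost_nonneg (hl : IsWalk E s t l) (hw : ∀ a b, E a b → 0 ≤ w a b) :
    0 ≤ walkCost w l :=
  walkCost_nonneg_of_isChain (hl.2.2.2.imp hw)

end IsWalk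

end

theorem ixg_star_bounded_suboptimal_general
    {V : Type*} (E : V → V → Prop) (w : V → V → ℝ)
    (hw : ∀ a b, E a b → 0 ≤ w a b) (s t : V)
    (hex : ∃ l, IsWalk E s t l)
    (ε : ℝ) (hε : 1 ≤ ε)
    (h : V → ℝ) (hadm : ∀ v l, IsWalk E v t l → h v ≤ walkCost w l)
    (g : V → ℝ)
    (hinv : ∀ l, IsWalk E s t l → ∃ l₁ v l₂, l = l₁ ++ v :: l₂ ∧
      g v ≤ walkCost w (l₁ ++ [v]) ∧ g t ≤ g v + ε * h v) :
    g t ≤ ε * sInf {c | ∃ l, IsWalk E s t l ∧ walkCost w l = c} := by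
  have hε_pos : 0 < ε := zero_lt_one.trans_le hε
  have le_mul_cost (l : List V) (hl : IsWalk E s t l) : g t ≤ ε * walkCost w l := by
    obtain ⟨l₁, v, l₂, rfl, hgv, hgt⟩ := hinv l hl
    have prefix_nonneg : 0 ≤ walkCost w (l₁ ++ [v]) := hl.left.walkCost_nonneg hw
    have le_suffix : h v ≤ walkCost w (v :: l₂) := hadm v _ hl.right
    exact le_mul_walkCost_append_cons hε prefix_nonneg hgv le_suffix hgt
  obtain ⟨l₀, hl₀⟩ := hex
  rw [← div_le_iff₀' hε_pos]
  refine le_csInf ⟨_, l₀, hl₀, rfl⟩ ?_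
  rintro _ ⟨l, hl, rfl⟩
  exact (div_le_iff₀' hε_pos).2 (le_mul_cost l hl)

/-- Theorem 2, bounded suboptimality of IxG*, invariant form. -/
theorem ixg_star_bounded_suboptimal
    {V : Type*} [Fintype V] (E : V → V → Prop) (w : V → V → ℝ)
    (hw : ∀ a b, E a b → 0 ≤ w a b) (s t : V)
    (hex : ∃ l, IsWalk E s t l)
    (ε : ℝ) (hε : 1 ≤ ε)
    (h : V → ℝ) (hadm : ∀ v l, IsWalk E v t l → h v ≤ walkCost w l)
    (hh0 : ∀ v, 0 ≤ h v)
    (g : V → ℝ)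
    (hinv : ∀ l, IsWalk E s t l → ∃ l₁ v l₂, l = l₁ ++ v :: l₂ ∧
      g v ≤ walkCost w (l₁ ++ [v]) ∧ g t ≤ g v + ε * h v) :
    g t ≤ ε * sInf {c | ∃ l, IsWalk E s t l ∧ walkCost w l = c} :=
  ixg_star_bounded_suboptimal_general E w hw s t hex ε hε h hadm g hinv
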